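/- arXiv:2010.12003 — 2 statements merged into one kernel-verified Lean document; each statement's English description precedes it below -/
import Mathlib

section
/- Let (X, ϱ, μ) be an Ahlfors regular space of dimension d with constant C, equipped with a dyadic decomposition of parameters δ and K, and let 0 < s ≤ d. Then for every dyadic cube Q one has D^s_∞(int(Q)) ≥ C^{-2s/d}·K^{-s}·D^s_∞(Q), where int(Q) denotes the topological interior of Q. -/
/-!
Write `p = s / d ∈ (0, 1]` and `c = C ^ (-2s/d) * K ^ (-s) ≤ 1`. If `B` is a cube of a generation `i`
with `K δ ^ i ≤ diam X`, then Ahlfors regularity applies to both balls sandwiching `B` and gives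
`c * μ B ^ p ≤ μ (interior B) ^ p` (`rpow_measure_le_interior`).

Ahlfors regularity says nothing about balls of radius larger than `diam X`, so this comparison may
fail for a large cube `Q`, and one argues on descendants instead. Fix a generation `i`, not
smaller than that of `Q`, with `K δ ^ i ≤ diam X`. Given a cover `S` of `interior Q` by cubes,
call a cube `B ⊆ Q` of generation `i` *swallowing* if every member of `S` that meets `B` is
contained in `B`. By nestedness every other cube `B ⊆ Q` of generation `i` lies in a member of `S`.
Replacing in `S` the members contained in a swallowing cube by that cube yields a cover of `Q`.
Since `t ↦ t ^ p` is subadditive (`rpow_tsum_le_tsum_rpow`), the members of `S` inside a swallowing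
`B` satisfy `c * μ B ^ p ≤ μ (interior B) ^ p ≤ ∑ μ A ^ p`, so the new cover costs at most `c⁻¹`
times the old one. If `diam X = 0` then `Q = X` is open and there is nothing to prove.
-/

open MeasureTheory Metric Set ENNReal Filter

noncomputable section

/-- `(X, ϱ, μ)` is Ahlfors regular of dimension `d` with constant `C`:
`C⁻¹ r^d ≤ μ(B(x,r)) ≤ C r^d` for all `x` and `0 < r ≤ diam X`. -/
def AhlforsRegular {X : Type*} [MetricSpace X] [MeasurableSpace X]
    (μ : Measure X) (d C : ℝ) : Prop :=
  1 ≤ C ∧ ∀ (x : X) (r : ℝ), 0 < r → ENNReal.ofReal r ≤ EMetric.diam (Set.univ : Set X) →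
    ENNReal.ofReal (C⁻¹ * r ^ d) ≤ μ (Metric.ball x r) ∧
      μ (Metric.ball x r) ≤ ENNReal.ofReal (C * r ^ d)

/-- A dyadic decomposition of parameters `δ` and `K` on a metric measure space. -/
structure DyadicDecomp (X : Type*) [MetricSpace X] [MeasurableSpace X] (δ K : ℝ) where
  ι : ℕ → Type
  Q : ∀ j : ℕ, ι j → Set X
  measurableSet : ∀ j k, MeasurableSet (Q j k)
  cover : ∀ j : ℕ, (⋃ k, Q j k) = Set.univ
  quasiball : ∀ j k, ∃ x ∈ Q j k,
    Metric.ball x (δ ^ j) ⊆ Q j k ∧ Q j k ⊆ Metric.ball x (K * δ ^ j)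
  nested : ∀ (i j : ℕ) (k' : ι i) (k : ι j), j ≤ i →
    Q i k' ⊆ Q j k ∨ Disjoint (Q i k') (Q j k)

/-- `A` is a dyadic cube of the decomposition `𝒟`. -/
def DyadicDecomp.IsCube {X : Type*} [MetricSpace X] [MeasurableSpace X] {δ K : ℝ}
    (𝒟 : DyadicDecomp X δ K) (A : Set X) : Prop :=
  ∃ j k, A = 𝒟.Q j k

/-- The net content `D^s_∞(E)`: infimum of `Σ μ(Qₙ)^(s/d)` over countable covers of `E`
by dyadic cubes. -/
def netContent {X : Type*} [MetricSpace X] [MeasurableSpace X] {δ K : ℝ}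
    (𝒟 : DyadicDecomp X δ K) (μ : Measure X) (d s : ℝ) (E : Set X) : ℝ≥0∞ :=
  ⨅ (S : Set (Set X)) (_ : S.Countable) (_ : ∀ A ∈ S, 𝒟.IsCube A) (_ : E ⊆ ⋃₀ S),
    ∑' A : S, μ (A : Set X) ^ (s / d)

/-- Countable subadditivity of `t ↦ t ^ p` on `[0, ∞]` for `0 < p ≤ 1`. -/
theorem rpow_tsum_le_tsum_rpow {α : Type*} (f : α → ℝ≥0∞) {p : ℝ} (hp : 0 < p) (hp1 : p ≤ 1) :
    (∑' a, f a) ^ p ≤ ∑' a, f a ^ p := by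
  have h1 : Tendsto (fun t : Finset α => (∑ a ∈ t, f a) ^ p) atTop (nhds ((∑' a, f a) ^ p)) :=
    (ENNReal.continuous_rpow_const.tendsto _).comp ENNReal.summable.hasSum
  refine le_of_tendsto h1 (Eventually.of_forall fun t => ?_)
  calc (∑ a ∈ t, f a) ^ p ≤ ∑ a ∈ t, f a ^ p :=
        Finset.le_sum_of_subadditive (fun x : ℝ≥0∞ => x ^ p) (by simp [hp])
          (fun a b => ENNReal.rpow_add_le_add_rpow a b hp.le hp1) t f
    _ ≤ ∑' a, f a ^ p := ENNReal.sum_le_tsum t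

theorem const_le_one {C K d s : ℝ} (hC : 1 ≤ C) (hK : 1 ≤ K) (hd : 0 < d)
    (hs : 0 < s) : ENNReal.ofReal (C ^ (-(2 * s) / d) * K ^ (-s)) ≤ 1 := by
  rw [ENNReal.ofReal_le_one]
  have h1 : C ^ (-(2 * s) / d) ≤ 1 :=
    Real.rpow_le_one_of_one_le_of_nonpos hC (div_nonpos_of_nonpos_of_nonneg (by linarith) hd.le)
  have h2 : K ^ (-s) ≤ 1 := Real.rpow_le_one_of_one_le_of_nonpos hK (by linarith)
  exact mul_le_one₀ h1 (Real.rpow_nonneg (by linarith) _) h2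

/-- A set squeezed between concentric balls of radii `r` and `K * r`, the larger radius being at
most `diam X`, has an interior of comparable measure. -/
theorem rpow_measure_le_interior {X : Type*} [MetricSpace X] [MeasurableSpace X]
    {μ : Measure X} {d C K s r : ℝ} (hd : 0 < d) (hreg : AhlforsRegular μ d C) (hK : 1 ≤ K)
    (hs : 0 < s) (hr : 0 < r) (hdiam : ENNReal.ofReal (K * r) ≤ EMetric.diam (Set.univ : Set X))
    {x : X} {B : Set X} (h1 : Metric.ball x r ⊆ B) (h2 : B ⊆ Metric.ball x (K * r)) :
    ENNReal.ofReal (C ^ (-(2 * s) / d) * K ^ (-s)) * μ B ^ (s / d) ≤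
      μ (interior B) ^ (s / d) := by
  obtain ⟨hC, hreg⟩ := hreg
  have hC0 : 0 < C := by linarith
  have hK0 : 0 < K := by linarith
  have hp : 0 < s / d := div_pos hs hd
  have hrK : r ≤ K * r := le_mul_of_one_le_left hr.le hK
  have lower := (hreg x r hr ((ENNReal.ofReal_le_ofReal hrK).trans hdiam)).1
  have upper := (hreg x (K * r) (by positivity) hdiam).2
  have hc : C ^ (-(2 * s) / d) * K ^ (-s) = (C⁻¹ * C⁻¹ * (K ^ d)⁻¹) ^ (s / d) := by
    rw [Real.mul_rpow (by positivity) (by positivity), ← Real.rpow_neg hK0.le,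
      ← Real.rpow_mul hK0.le, ← Real.rpow_neg_one C, ← Real.rpow_add hC0, ← Real.rpow_mul hC0.le]
    congr 2
    · ring
    · field_simp
  rw [hc, ← ENNReal.ofReal_rpow_of_nonneg (by positivity) hp.le,
    ← ENNReal.mul_rpow_of_nonneg _ _ hp.le]
  refine ENNReal.rpow_le_rpow ?_ hp.le
  calc ENNReal.ofReal (C⁻¹ * C⁻¹ * (K ^ d)⁻¹) * μ B
      ≤ ENNReal.ofReal (C⁻¹ * C⁻¹ * (K ^ d)⁻¹) * ENNReal.ofReal (C * (K * r) ^ d) := by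
        gcongr
        exact (measure_mono h2).trans upper
    _ = ENNReal.ofReal (C⁻¹ * r ^ d) := by
        rw [← ENNReal.ofReal_mul (by positivity), Real.mul_rpow hK0.le hr.le]
        congr 1
        field_simp
    _ ≤ μ (Metric.ball x r) := lower
    _ ≤ μ (interior B) := measure_mono (interior_maximal h1 Metric.isOpen_ball)

theorem DyadicDecomp.IsCube.nonempty {X : Type*} [MetricSpace X] [MeasurableSpace X] {δ K : ℝ}
    {𝒟 : DyadicDecomp X δ K} {A : Set X} (hA : 𝒟.IsCube A) : A.Nonempty := by
  obtain ⟨j, k, rfl⟩ := hA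
  obtain ⟨x, hx, -⟩ := 𝒟.quasiball j k
  exact ⟨x, hx⟩

/-- The covering step: if the cubes of a generation `i ≥ j` satisfy
`c * μ B ^ p ≤ μ (interior B) ^ p`, then every cover of the interior of a cube of generation `j`
costs at least `c` times the net content of the cube. -/
theorem netContent_le_of_cover {X : Type*} [MetricSpace X] [MeasurableSpace X] {δ K : ℝ}
    (hδ0 : 0 < δ) (𝒟 : DyadicDecomp X δ K) (μ : Measure X) {d s : ℝ} (hp : 0 < s / d)
    (hp1 : s / d ≤ 1) {c : ℝ≥0∞} (hc : c ≤ 1) {i j : ℕ} (hij : j ≤ i)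
    (hcomp : ∀ k, c * μ (𝒟.Q i k) ^ (s / d) ≤ μ (interior (𝒟.Q i k)) ^ (s / d))
    (k₀ : 𝒟.ι j) (S : Set (Set X)) (hS : S.Countable) (hcube : ∀ A ∈ S, 𝒟.IsCube A)
    (hcov : interior (𝒟.Q j k₀) ⊆ ⋃₀ S) :
    c * netContent 𝒟 μ d s (𝒟.Q j k₀) ≤ ∑' A : S, μ (A : Set X) ^ (s / d) := by
  classical
  -- `P B`: `B ⊆ Q` is a swallowing cube of generation `i`.
  let P : Set X → Prop := fun B =>
    (∃ k, B = 𝒟.Q i k) ∧ B ⊆ 𝒟.Q j k₀ ∧ ∀ A ∈ S, (A ∩ B).Nonempty → A ⊆ B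
  have hPuniq : ∀ B B' : Set X, P B → P B' → (B ∩ B').Nonempty → B = B' := by
    rintro _ _ ⟨⟨k, rfl⟩, -⟩ ⟨⟨k', rfl⟩, -⟩ hne
    have hne' := Set.not_disjoint_iff_nonempty_inter.2 hne
    exact ((𝒟.nested i i k k' le_rfl).resolve_right hne').antisymm
      ((𝒟.nested i i k' k le_rfl).resolve_right fun h => hne' h.symm)
  let f : Set X → Set X := fun A => if h : ∃ B, P B ∧ A ⊆ B then h.choose else A
  have hf_sub : ∀ A, A ⊆ f A := by
    intro A
    by_cases h : ∃ B, P B ∧ A ⊆ B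
    · simpa only [f, dif_pos h] using h.choose_spec.2
    · simp only [f, dif_neg h, subset_refl]
  have hf_eq : ∀ A ∈ S, ∀ B, P B → A ⊆ B → f A = B := by
    intro A hA B hB hAB
    have h : ∃ B, P B ∧ A ⊆ B := ⟨B, hB, hAB⟩
    simp only [f, dif_pos h]
    obtain ⟨x, hx⟩ := (hcube A hA).nonempty
    exact hPuniq _ _ h.choose_spec.1 hB ⟨x, h.choose_spec.2 hx, hAB hx⟩
  have hf_or : ∀ A, P (f A) ∨ f A = A := by
    intro A
    by_cases h : ∃ B, P B ∧ A ⊆ B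
    · left
      simpa only [f, dif_pos h] using h.choose_spec.1
    · right
      simp only [f, dif_neg h]
  have hPcov : ∀ B, P B → ∀ x ∈ interior B, ∃ A ∈ S, x ∈ A ∧ f A = B := by
    intro B hB x hx
    obtain ⟨A, hA, hxA⟩ := hcov (interior_mono hB.2.1 hx)
    exact ⟨A, hA, hxA, hf_eq A hA B hB (hB.2.2 A hA ⟨x, hxA, interior_subset hx⟩)⟩
  let T : Set (Set X) := f '' S
  have hTcube : ∀ B ∈ T, 𝒟.IsCube B := by
    rintro _ ⟨A, hA, rfl⟩
    rcases hf_or A with ⟨⟨k, hk⟩, -⟩ | h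
    · exact ⟨i, k, hk⟩
    · rw [h]
      exact hcube A hA
  have hTcov : 𝒟.Q j k₀ ⊆ ⋃₀ T := by
    intro x hx
    obtain ⟨k, hk⟩ := Set.mem_iUnion.1 ((𝒟.cover i).symm ▸ Set.mem_univ x : x ∈ ⋃ k, 𝒟.Q i k)
    have hsub : 𝒟.Q i k ⊆ 𝒟.Q j k₀ :=
      (𝒟.nested i j k k₀ hij).resolve_right (Set.not_disjoint_iff.2 ⟨x, hk, hx⟩)
    by_cases hB : P (𝒟.Q i k)
    · obtain ⟨y, -, hy, -⟩ := 𝒟.quasiball i k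
      obtain ⟨A, hA, -, hfA⟩ := hPcov _ hB y
        (interior_maximal hy Metric.isOpen_ball (Metric.mem_ball_self (pow_pos hδ0 i)))
      exact ⟨f A, ⟨A, hA, rfl⟩, hfA ▸ hk⟩
    · have : ∃ A ∈ S, (A ∩ 𝒟.Q i k).Nonempty ∧ ¬ A ⊆ 𝒟.Q i k := by
        by_contra! hcon
        exact hB ⟨⟨k, rfl⟩, hsub, hcon⟩
      obtain ⟨A, hA, hne, hnot⟩ := this
      refine ⟨f A, ⟨A, hA, rfl⟩, hf_sub A ?_⟩
      obtain ⟨m, l, rfl⟩ := hcube A hA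
      have hnd := Set.not_disjoint_iff_nonempty_inter.2 hne
      rcases le_total i m with him | hmi
      · exact absurd ((𝒟.nested m i l k him).resolve_right hnd) hnot
      · exact ((𝒟.nested i m k l hmi).resolve_right fun h => hnd h.symm) hk
  let g : S → T := fun A => ⟨f A, A, A.2, rfl⟩
  have : Countable S := hS.to_subtype
  have hfiber : ∀ B : T, c * μ (B : Set X) ^ (s / d) ≤
      ∑' A : g ⁻¹' {B}, μ ((A : S) : Set X) ^ (s / d) := by
    intro B
    by_cases hB : P B
    · obtain ⟨k, hk⟩ := hB.1
      have hsub : interior (B : Set X) ⊆ ⋃ A : g ⁻¹' {B}, ((A : S) : Set X) := by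
        intro x hx
        obtain ⟨A, hA, hxA, hfA⟩ := hPcov _ hB x hx
        exact Set.mem_iUnion.2 ⟨⟨⟨A, hA⟩, Subtype.ext hfA⟩, hxA⟩
      calc c * μ (B : Set X) ^ (s / d) ≤ μ (interior (B : Set X)) ^ (s / d) := by
            rw [hk]
            exact hcomp k
        _ ≤ (∑' A : g ⁻¹' {B}, μ ((A : S) : Set X)) ^ (s / d) :=
            ENNReal.rpow_le_rpow ((measure_mono hsub).trans (measure_iUnion_le _)) hp.le
        _ ≤ _ := rpow_tsum_le_tsum_rpow _ hp hp1
    · obtain ⟨B, A, hA, rfl⟩ := B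
      have hfA : f A = A := (hf_or A).resolve_left hB
      calc c * μ (f A) ^ (s / d) ≤ μ (f A) ^ (s / d) := mul_le_of_le_one_left' hc
        _ = μ A ^ (s / d) := by rw [hfA]
        _ ≤ _ := ENNReal.le_tsum
            (f := fun A' : g ⁻¹' {⟨f A, A, hA, rfl⟩} => μ ((A' : S) : Set X) ^ (s / d))
            ⟨⟨A, hA⟩, rfl⟩
  calc c * netContent 𝒟 μ d s (𝒟.Q j k₀)
      ≤ c * ∑' B : T, μ (B : Set X) ^ (s / d) := by
        gcongr
        exact iInf_le_of_le T <| iInf_le_of_le (hS.image f) <| iInf_le_of_le hTcube <|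
          iInf_le_of_le hTcov le_rfl
    _ = ∑' B : T, c * μ (B : Set X) ^ (s / d) := ENNReal.tsum_mul_left.symm
    _ ≤ ∑' B : T, ∑' A : g ⁻¹' {B}, μ ((A : S) : Set X) ^ (s / d) :=
        ENNReal.tsum_le_tsum hfiber
    _ = ∑' A : S, μ (A : Set X) ^ (s / d) :=
        ENNReal.tsum_fiberwise (fun A : S => μ (A : Set X) ^ (s / d)) g

/-- For every dyadic cube `Q`, `D^s_∞(int(Q)) ≥ C^(-2s/d) · K^(-s) · D^s_∞(Q)`. -/
theorem netContent_interior_cube {X : Type*} [MetricSpace X] [MeasurableSpace X]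
    [BorelSpace X] (μ : Measure X) (d C : ℝ) (hd : 0 < d)
    (hreg : AhlforsRegular μ d C) (δ K : ℝ) (hδ0 : 0 < δ) (hδ1 : δ < 1) (hK : 1 ≤ K)
    (𝒟 : DyadicDecomp X δ K) (s : ℝ) (hs : 0 < s) (hsd : s ≤ d) :
    ∀ Q : Set X, 𝒟.IsCube Q →
      ENNReal.ofReal (C ^ (-(2 * s) / d) * K ^ (-s)) * netContent 𝒟 μ d s Q ≤
        netContent 𝒟 μ d s (interior Q) := by
  rintro _ ⟨j, k₀, rfl⟩
  have hc := const_le_one hreg.1 hK hd hs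
  rcases Set.subsingleton_or_nontrivial (Set.univ : Set X) with hX | hX
  · have hsub : Subsingleton X := Set.subsingleton_univ_iff.1 hX
    have hQ : interior (𝒟.Q j k₀) = 𝒟.Q j k₀ := by
      rw [Subsingleton.eq_univ_of_nonempty (DyadicDecomp.IsCube.nonempty ⟨j, k₀, rfl⟩), interior_univ]
    rw [hQ]
    exact mul_le_of_le_one_left' hc
  · have hpos : 0 < EMetric.diam (Set.univ : Set X) := Metric.ediam_pos_iff.2 hX
    have hlim : Tendsto (fun n : ℕ => ENNReal.ofReal (K * δ ^ n)) atTop (nhds 0) := by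
      have h := (tendsto_pow_atTop_nhds_zero_of_lt_one hδ0.le hδ1).const_mul K
      simpa using ENNReal.tendsto_ofReal h
    obtain ⟨i, hi, hij⟩ := ((hlim.eventually_le_const hpos).and (eventually_ge_atTop j)).exists
    have hcomp : ∀ k, ENNReal.ofReal (C ^ (-(2 * s) / d) * K ^ (-s)) * μ (𝒟.Q i k) ^ (s / d) ≤
        μ (interior (𝒟.Q i k)) ^ (s / d) := by
      intro k
      obtain ⟨x, -, h1, h2⟩ := 𝒟.quasiball i k
      exact rpow_measure_le_interior hd hreg hK hs (pow_pos hδ0 i) hi h1 h2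
    exact le_iInf fun S => le_iInf fun hS => le_iInf fun hcube => le_iInf fun hcov =>
      netContent_le_of_cover hδ0 𝒟 μ (div_pos hs hd) ((div_le_one hd).2 hsd) hc hij hcomp k₀ S
        hS hcube hcov
end
end

section
/- Let X be an Ahlfors regular space of dimension d, let α > 1, let {A_j} be a family of (c₁, C₁, ε_j)-nets with ε_j → 0, and set E_j = ⋃_{x ∈ A_j} B(x, ε_j^α). Then for every 0 < s < d/α and every K ≥ 1 there exists a constant L > 0 such that for every K-quasi-ball D ⊆ X one has limsup_{j→∞} Φ^s_∞(D ∩ E_j) ≥ L·Φ^s_∞(D). -/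
/-! The proof is a mass distribution argument. After replacing the radius of the inner ball by a
comparable `ρ` with `4ρ ≤ diam X`, the content of `D` is at most a constant times `ρ^s`, so it
suffices to bound `Φ^s_∞(D ∩ E_j)` from below by a constant times `ρ^s` for all large `j`.

Write `ε = ε_j`, `δ = ε^α`, and let `E` be the union of the balls `B(x, δ)` over the net points `x`
in `B(x₀, ρ/2)`. Comparing volumes, there are at least about `(ρ/ε)^d` such points, so
`μ(E) ≳ (δ/ε)^d ρ^d` (`le_measure_thickening`). The same comparison bounds the number of net
points in a ball of radius `r ≥ ε` by about `(r/ε)^d`, which gives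
`μ(E ∩ B(c,r)) ≲ (δ/ε)^d ρ^(d-s) r^s` for all `r ≤ ρ` (`measure_thickening_inter_ball_le`): for
`r ≥ ε` this is the count; for `r < ε` it uses either the count at radius `ε` or, when `r < δ`,
the regularity of `μ` itself, together with `ε^d ≤ ρ^(d-s) δ^s`. This last inequality is where
`s < d/α` enters: it says `ε^(d - αs) ≤ ρ^(d-s)`, which holds for small `ε`. Summing over the balls
of a cover gives the lower bound (`le_sphContent_of_measure_le`). -/

open MeasureTheory Metric Set ENNReal Filter

noncomputable section

/-- `A` is a `(c₁, C₁, ε)`-net: distinct points of `A` are `> 2c₁ε` separated and every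
point of `X` is within `< C₁ε` of `A`. -/
def IsNet {X : Type*} [MetricSpace X] (c₁ C₁ ε : ℝ) (A : Set X) : Prop :=
  (∀ x ∈ A, ∀ y ∈ A, x ≠ y → 2 * c₁ * ε < dist x y) ∧
    ∀ x : X, ∃ y ∈ A, dist x y < C₁ * ε

/-- The set of `(ℰ, α)`-approximable points: `limsup_j ⋃_{x ∈ A_j} B(x, ε_j^α)`. -/
def approxPoints {X : Type*} [MetricSpace X] (A : ℕ → Set X) (ε : ℕ → ℝ) (α : ℝ) : Set X :=
  ⋂ j : ℕ, ⋃ j' : ℕ, ⋃ (_ : j ≤ j'), ⋃ x ∈ A j', Metric.ball x (ε j' ^ α)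

/-- The spherical Hausdorff content `Φ^s_∞(E)`: infimum of `Σ rₙ^s` over countable covers of
`E` by open balls `B(xₙ, rₙ)`. -/
def sphContent {X : Type*} [MetricSpace X] (s : ℝ) (E : Set X) : ℝ≥0∞ :=
  ⨅ (c : ℕ → X) (r : ℕ → ℝ) (_ : E ⊆ ⋃ n, Metric.ball (c n) (r n)),
    ∑' n, ENNReal.ofReal (r n) ^ s

/-! ### Volume estimates for thickened nets -/

/-- The regularity bounds for radii at most `T`. Working below a scale `T ≤ diam X` avoids any
claim about `μ X`, which may be infinite even when `X` is bounded. -/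
def RegularUpTo {X : Type*} [MetricSpace X] [MeasurableSpace X]
    (μ : Measure X) (d C T : ℝ) : Prop :=
  ∀ (x : X) (r : ℝ), 0 < r → r ≤ T →
    ENNReal.ofReal (C⁻¹ * r ^ d) ≤ μ (Metric.ball x r) ∧
      μ (Metric.ball x r) ≤ ENNReal.ofReal (C * r ^ d)

section packing

variable {X : Type*} [MetricSpace X] [MeasurableSpace X] [BorelSpace X]
  {μ : Measure X} {d C T : ℝ}

/-- The balls of radius `b` around `2b`-separated points are disjoint, so their measures add. -/
lemma card_mul_le_measure (hμ : RegularUpTo μ d C T) {b : ℝ} (hb : 0 < b) (hbT : b ≤ T)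
    (t : Finset X) (ht : ∀ x ∈ t, ∀ y ∈ t, x ≠ y → 2 * b < dist x y) :
    (t.card : ℝ≥0∞) * ENNReal.ofReal (C⁻¹ * b ^ d) ≤ μ (⋃ x ∈ t, ball x b) := by
  rw [measure_biUnion_finset]
  · rw [← nsmul_eq_mul]
    exact Finset.card_nsmul_le_sum _ _ _ fun x _ => (hμ x b hb hbT).1
  · intro x hx y hy hxy
    exact ball_disjoint_ball (by linarith [ht x hx y hy hxy])
  · intro x _
    exact measurableSet_ball

/-- Packing bound for separated points in a ball, by comparing volumes. -/
lemma card_mul_le (hC : 0 < C) (hμ : RegularUpTo μ d C T) {a r : ℝ} (ha : 0 < a)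
    (hr : 0 < r) (har : r + a ≤ T) (c : X) (t : Finset X)
    (ht : ∀ x ∈ t, ∀ y ∈ t, x ≠ y → 2 * a < dist x y) (htc : (t : Set X) ⊆ ball c r) :
    (t.card : ℝ) * (C⁻¹ * a ^ d) ≤ C * (r + a) ^ d := by
  have h1 := card_mul_le_measure hμ ha (by linarith) t ht
  have h2 : (⋃ x ∈ t, ball x a) ⊆ ball c (r + a) := by
    refine iUnion₂_subset fun x hx => ball_subset_ball' ?_
    have := mem_ball.1 (htc hx)
    linarith
  have h3 := (h1.trans (measure_mono h2)).trans (hμ c (r + a) (by linarith) har).2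
  have h0 : 0 ≤ C * (r + a) ^ d := by positivity
  rw [← ENNReal.ofReal_natCast, ← ENNReal.ofReal_mul (by positivity)] at h3
  exact (ENNReal.ofReal_le_ofReal_iff h0).1 h3

lemma finite_inter_ball (hC : 0 < C) (hμ : RegularUpTo μ d C T) {a r : ℝ} (ha : 0 < a)
    (hr : 0 < r) (har : r + a ≤ T) (c : X) (A : Set X)
    (hA : ∀ x ∈ A, ∀ y ∈ A, x ≠ y → 2 * a < dist x y) : (A ∩ ball c r).Finite := by
  by_contra hinf
  obtain ⟨n, hn⟩ := exists_nat_gt (C * (r + a) ^ d / (C⁻¹ * a ^ d))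
  obtain ⟨t, hts, htn⟩ := Set.Infinite.exists_subset_card_eq hinf n
  have h := card_mul_le hC hμ ha hr har c t
    (fun x hx y hy => hA x (hts hx).1 y (hts hy).1) (fun x hx => (hts hx).2)
  rw [htn] at h
  have hpos : 0 < C⁻¹ * a ^ d := by positivity
  rw [div_lt_iff₀ hpos] at hn
  linarith

/-- Count-based upper bound for the mass of the `δ`-thickening of a net in a ball of radius
`r ≥ ε`. -/
lemma measure_thickening_inter_ball_le_of_le (hC : 1 ≤ C) (hd : 0 < d) {c₁ ε δ ρ r : ℝ}
    (hc₁ : 0 < c₁) (hε : 0 < ε) (hδ : 0 < δ) (hδε : δ ≤ ε) (hερ : ε ≤ ρ) (hcε : c₁ * ε ≤ ρ)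
    (hμ : RegularUpTo μ d C (4 * ρ)) (A : Set X)
    (hA : ∀ x ∈ A, ∀ y ∈ A, x ≠ y → 2 * (c₁ * ε) < dist x y)
    (hεr : ε ≤ r) (hrρ : r ≤ ρ) (c : X) :
    μ ((⋃ x ∈ A, ball x δ) ∩ ball c r) ≤
      ENNReal.ofReal (C ^ 3 * ((2 + c₁) / c₁) ^ d * (δ / ε) ^ d * r ^ d) := by
  have hC0 : 0 < C := by linarith
  have hr : 0 < r := by linarith
  have ha : 0 < c₁ * ε := by positivity
  have hfin := finite_inter_ball hC0 hμ (r := r + δ) ha (by linarith) (by linarith) c A hA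
  set t := hfin.toFinset with ht
  have hcard := card_mul_le hC0 hμ (r := r + δ) ha (by linarith) (by linarith) c t
    (fun x hx y hy => hA x (by simp [ht] at hx; exact hx.1) y (by simp [ht] at hy; exact hy.1))
    (fun x hx => by simp [ht] at hx; exact hx.2)
  have hsub : (⋃ x ∈ A, ball x δ) ∩ ball c r ⊆ ⋃ x ∈ t, ball x δ := by
    rintro y ⟨hy, hyc⟩
    simp only [mem_iUnion, exists_prop] at hy ⊢
    obtain ⟨x, hx, hyx⟩ := hy
    refine ⟨x, ?_, hyx⟩
    simp only [ht, Finite.mem_toFinset, mem_inter_iff, mem_ball] at hyc hyx ⊢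
    refine ⟨hx, ?_⟩
    have := dist_triangle x y c
    rw [dist_comm x y] at this
    linarith
  have hpow : (r + δ + c₁ * ε) ^ d ≤ ((2 + c₁) * r) ^ d := by
    apply Real.rpow_le_rpow (by positivity) _ hd.le
    nlinarith
  have hN : (t.card : ℝ) ≤ C ^ 2 * ((2 + c₁) / c₁) ^ d * (r / ε) ^ d := by
    have h1 : (t.card : ℝ) * (C⁻¹ * (c₁ * ε) ^ d) ≤ C * ((2 + c₁) * r) ^ d :=
      hcard.trans (by gcongr)
    rw [← le_div_iff₀ (by positivity)] at h1
    refine h1.trans (le_of_eq ?_)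
    rw [Real.mul_rpow (by positivity) (by positivity), Real.mul_rpow (by positivity) (by positivity),
      Real.div_rpow (by positivity) (by positivity), Real.div_rpow (by positivity) (by positivity)]
    field_simp
  calc μ ((⋃ x ∈ A, ball x δ) ∩ ball c r) ≤ μ (⋃ x ∈ t, ball x δ) := measure_mono hsub
    _ ≤ ∑ x ∈ t, μ (ball x δ) := measure_biUnion_finset_le _ _
    _ ≤ t.card • ENNReal.ofReal (C * δ ^ d) :=
        Finset.sum_le_card_nsmul _ _ _ fun x _ => (hμ x δ hδ (by linarith)).2
    _ = ENNReal.ofReal (t.card * (C * δ ^ d)) := by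
        rw [nsmul_eq_mul, ← ENNReal.ofReal_natCast, ← ENNReal.ofReal_mul (by positivity)]
    _ ≤ _ := by
        apply ENNReal.ofReal_le_ofReal
        calc (t.card : ℝ) * (C * δ ^ d)
            ≤ (C ^ 2 * ((2 + c₁) / c₁) ^ d * (r / ε) ^ d) * (C * δ ^ d) := by gcongr
          _ = _ := by
            rw [Real.div_rpow hr.le hε.le, Real.div_rpow hδ.le hε.le]
            field_simp

/-- The growth bound of the mass distribution: at every scale `r ≤ ρ` the thickened net has mass
at most a constant times `(δ/ε)^d ρ^(d-s) r^s` in a ball of radius `r`. -/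
lemma measure_thickening_inter_ball_le (hC : 1 ≤ C) (hd : 0 < d) {c₁ ε δ ρ r s : ℝ}
    (hc₁ : 0 < c₁) (hε : 0 < ε) (hδ : 0 < δ) (hδε : δ ≤ ε) (hερ : ε ≤ ρ) (hcε : c₁ * ε ≤ ρ)
    (hμ : RegularUpTo μ d C (4 * ρ)) (A : Set X)
    (hA : ∀ x ∈ A, ∀ y ∈ A, x ≠ y → 2 * (c₁ * ε) < dist x y)
    (hs : 0 < s) (hsd : s < d) (hsmall : ε ^ d ≤ ρ ^ (d - s) * δ ^ s)
    (hr : 0 < r) (hrρ : r ≤ ρ) (c : X) :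
    μ ((⋃ x ∈ A, ball x δ) ∩ ball c r) ≤
      ENNReal.ofReal (C ^ 3 * ((2 + c₁) / c₁) ^ d * (δ / ε) ^ d * ρ ^ (d - s) * r ^ s) := by
  have hC0 : 0 < C := by linarith
  have hρ : 0 < ρ := by linarith
  have hsplit : ∀ u : ℝ, 0 < u → u ^ d = u ^ (d - s) * u ^ s := fun u hu => by
    rw [← Real.rpow_add hu]; congr 1; ring
  rcases le_or_gt ε r with hεr | hrε
  · refine (measure_thickening_inter_ball_le_of_le hC hd hc₁ hε hδ hδε hερ hcε hμ A hA hεr hrρ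
      c).trans (ENNReal.ofReal_le_ofReal ?_)
    rw [hsplit r hr, ← mul_assoc]
    have : r ^ (d - s) ≤ ρ ^ (d - s) := Real.rpow_le_rpow hr.le hrρ (by linarith)
    gcongr
  rcases le_or_gt δ r with hδr | hrδ
  · refine (measure_mono (inter_subset_inter_right _ (ball_subset_ball hrε.le))).trans ?_
    refine (measure_thickening_inter_ball_le_of_le hC hd hc₁ hε hδ hδε hερ hcε hμ A hA le_rfl hερ
      c).trans (ENNReal.ofReal_le_ofReal ?_)
    have h1 : δ ^ s ≤ r ^ s := Real.rpow_le_rpow hδ.le hδr hs.le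
    rw [mul_assoc _ (ρ ^ (d - s))]
    have h2 : ε ^ d ≤ ρ ^ (d - s) * r ^ s := hsmall.trans (by gcongr)
    gcongr
  · refine (measure_mono inter_subset_right).trans ?_
    refine (hμ c r hr (by linarith)).2.trans (ENNReal.ofReal_le_ofReal ?_)
    have h1 : r ^ (d - s) ≤ δ ^ (d - s) := Real.rpow_le_rpow hr.le hrδ.le (by linarith)
    have h2 : 1 ≤ ((2 + c₁) / c₁) ^ d := by
      apply Real.one_le_rpow _ hd.le
      rw [le_div_iff₀ hc₁]; linarith
    have h3 : C ≤ C ^ 3 * ((2 + c₁) / c₁) ^ d := by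
      have : C ≤ C ^ 3 := le_self_pow₀ hC (by norm_num)
      nlinarith [pow_pos hC0 3]
    have h4 : δ ^ (d - s) ≤ (δ / ε) ^ d * ρ ^ (d - s) := by
      rw [Real.div_rpow hδ.le hε.le, div_mul_eq_mul_div, le_div_iff₀ (by positivity),
        hsplit δ hδ, mul_assoc]
      gcongr
      rwa [mul_comm]
    calc C * r ^ d = C * r ^ (d - s) * r ^ s := by rw [hsplit r hr, mul_assoc]
      _ ≤ (C ^ 3 * ((2 + c₁) / c₁) ^ d) * ((δ / ε) ^ d * ρ ^ (d - s)) * r ^ s := by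
          gcongr
          exact h1.trans h4
      _ = _ := by ring

/-- The total mass of the mass distribution: since the net points in `B(x₀, ρ/2)` have
`C₁ε`-balls covering `B(x₀, ρ/4)`, there are at least about `(ρ/ε)^d` of them. -/
lemma le_measure_thickening (hC : 1 ≤ C) {c₁ C₁ ε δ ρ : ℝ}
    (hc₁ : 0 < c₁) (hC₁ : 0 < C₁) (hε : 0 < ε) (hδ : 0 < δ) (hδε : δ ≤ c₁ * ε)
    (hcε : c₁ * ε ≤ ρ) (hCε : C₁ * ε ≤ ρ / 4)
    (hμ : RegularUpTo μ d C (4 * ρ)) (A : Set X) (hA : IsNet c₁ C₁ ε A) (x₀ : X) :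
    ENNReal.ofReal ((C ^ 3 * (4 * C₁) ^ d)⁻¹ * (δ / ε) ^ d * ρ ^ d) ≤
      μ (⋃ x ∈ A ∩ ball x₀ (ρ / 2), ball x δ) := by
  have hC0 : 0 < C := by linarith
  have ha : 0 < c₁ * ε := by positivity
  have hb : 0 < C₁ * ε := by positivity
  have hρ : 0 < ρ := by linarith
  have hsep : ∀ x ∈ A, ∀ y ∈ A, x ≠ y → 2 * (c₁ * ε) < dist x y := fun x hx y hy h => by
    have := hA.1 x hx y hy h
    linarith
  have hfin := finite_inter_ball hC0 hμ (r := ρ / 2) ha (by linarith) (by linarith) x₀ A hsep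
  set t := hfin.toFinset with ht
  have hmem : ∀ x, x ∈ t ↔ x ∈ A ∩ ball x₀ (ρ / 2) := fun x => by
    rw [ht, Finite.mem_toFinset]
  have hcov : ball x₀ (ρ / 4) ⊆ ⋃ x ∈ t, ball x (C₁ * ε) := by
    intro y hy
    obtain ⟨x, hx, hyx⟩ := hA.2 y
    simp only [mem_iUnion, exists_prop]
    refine ⟨x, (hmem x).2 ⟨hx, ?_⟩, hyx⟩
    rw [mem_ball] at hy ⊢
    have := dist_triangle x y x₀
    rw [dist_comm x y] at this
    linarith
  have hN : C⁻¹ * (ρ / 4) ^ d ≤ t.card * (C * (C₁ * ε) ^ d) := by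
    have : ENNReal.ofReal (C⁻¹ * (ρ / 4) ^ d) ≤ ENNReal.ofReal (t.card * (C * (C₁ * ε) ^ d)) :=
      calc _ ≤ μ (ball x₀ (ρ / 4)) := (hμ x₀ (ρ / 4) (by linarith) (by linarith)).1
        _ ≤ μ (⋃ x ∈ t, ball x (C₁ * ε)) := measure_mono hcov
        _ ≤ ∑ x ∈ t, μ (ball x (C₁ * ε)) := measure_biUnion_finset_le _ _
        _ ≤ t.card • ENNReal.ofReal (C * (C₁ * ε) ^ d) :=
            Finset.sum_le_card_nsmul _ _ _ fun x _ => (hμ x _ hb (by linarith)).2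
        _ = _ := by
            rw [nsmul_eq_mul, ← ENNReal.ofReal_natCast, ← ENNReal.ofReal_mul (by positivity)]
    exact (ENNReal.ofReal_le_ofReal_iff (by positivity)).1 this
  have hE : (⋃ x ∈ A ∩ ball x₀ (ρ / 2), ball x δ) = ⋃ x ∈ t, ball x δ := by
    simp only [hmem]
  rw [hE]
  refine le_trans ?_ (card_mul_le_measure hμ hδ (by linarith) t fun x hx y hy h => ?_)
  · rw [← ENNReal.ofReal_natCast, ← ENNReal.ofReal_mul (by positivity)]
    apply ENNReal.ofReal_le_ofReal
    rw [← div_le_iff₀ (by positivity)] at hN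
    refine le_trans (le_of_eq ?_) (mul_le_mul_of_nonneg_right hN (by positivity))
    rw [Real.mul_rpow (by positivity) (by positivity), Real.mul_rpow (by positivity) (by positivity),
      Real.div_rpow (by positivity) (by positivity), Real.div_rpow (by positivity) (by positivity)]
    field_simp
  · have := hsep x ((hmem x).1 hx).1 y ((hmem y).1 hy).1 h
    linarith

end packing

/-! ### Spherical content -/

section content

variable {X : Type*} [MetricSpace X]

lemma sphContent_mono {s : ℝ} {E F : Set X} (h : E ⊆ F) : sphContent s E ≤ sphContent s F :=
  iInf_mono fun _ => iInf_mono fun _ => iInf_mono' fun hF => ⟨h.trans hF, le_rfl⟩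

lemma sphContent_ball_le {s : ℝ} (hs : 0 < s) (x : X) (r : ℝ) :
    sphContent s (ball x r) ≤ ENNReal.ofReal r ^ s := by
  have hcov : ball x r ⊆ ⋃ n : ℕ, ball x (if n = 0 then r else 0) := fun y hy =>
    mem_iUnion.2 ⟨0, by simpa using hy⟩
  have hle : sphContent s (ball x r) ≤
      ∑' n : ℕ, ENNReal.ofReal (if n = 0 then r else 0) ^ s :=
    iInf_le_of_le (fun _ => x) <| iInf_le_of_le (fun n => if n = 0 then r else 0) <|
      iInf_le_of_le hcov le_rfl
  refine hle.trans ?_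
  rw [tsum_eq_single 0]
  · simp
  · intro n hn
    simp [hn, hs]

lemma sphContent_of_subsingleton [Subsingleton X] {s : ℝ} (hs : 0 < s) (x : X) (E : Set X) :
    sphContent s E = 0 := by
  have h : ∀ᶠ r in nhdsWithin (0 : ℝ) (Ioi 0), sphContent s E ≤ ENNReal.ofReal r ^ s := by
    filter_upwards [self_mem_nhdsWithin] with r hr
    refine (sphContent_mono fun y _ => ?_).trans (sphContent_ball_le hs x r)
    rw [Subsingleton.elim y x]
    exact mem_ball_self hr
  have hlim : Tendsto (fun r : ℝ => ENNReal.ofReal r ^ s) (nhdsWithin 0 (Ioi 0)) (nhds 0) := by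
    have hc : Continuous fun r : ℝ => ENNReal.ofReal r ^ s :=
      (ENNReal.continuous_rpow_const).comp ENNReal.continuous_ofReal
    simpa [hs] using (hc.tendsto 0).mono_left nhdsWithin_le_nhds
  exact nonpos_iff_eq_zero.1 (ge_of_tendsto hlim h)

/-- Mass distribution principle, with the growth condition required only for radii `≤ ρ`. -/
lemma le_sphContent_of_measure_le [MeasurableSpace X] {μ : Measure X} {s ρ P Q : ℝ} {E : Set X}
    (hs : 0 < s) (hρ : 0 < ρ) (hP : 0 < P) (hE : ENNReal.ofReal Q ≤ μ E)
    (hball : ∀ (c : X) (r : ℝ), 0 < r → r ≤ ρ → μ (E ∩ ball c r) ≤ ENNReal.ofReal (P * r ^ s)) :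
    ENNReal.ofReal (min (ρ ^ s) (Q / P)) ≤ sphContent s E := by
  refine le_iInf fun c => le_iInf fun r => le_iInf fun hcov => ?_
  by_cases hbig : ∃ n, ρ < r n
  · obtain ⟨n, hn⟩ := hbig
    calc ENNReal.ofReal (min (ρ ^ s) (Q / P)) ≤ ENNReal.ofReal (ρ ^ s) :=
          ENNReal.ofReal_le_ofReal (min_le_left _ _)
      _ = ENNReal.ofReal ρ ^ s := (ENNReal.ofReal_rpow_of_pos hρ).symm
      _ ≤ ENNReal.ofReal (r n) ^ s :=
          ENNReal.rpow_le_rpow (ENNReal.ofReal_le_ofReal hn.le) hs.le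
      _ ≤ _ := ENNReal.le_tsum n
  · push Not at hbig
    have hterm : ∀ n, μ (E ∩ ball (c n) (r n)) ≤ ENNReal.ofReal P * ENNReal.ofReal (r n) ^ s := by
      intro n
      rcases le_or_gt (r n) 0 with h0 | h0
      · simp [ball_eq_empty.2 h0]
      · rw [ENNReal.ofReal_rpow_of_pos h0, ← ENNReal.ofReal_mul hP.le]
        exact hball _ _ h0 (hbig n)
    have hsum : ENNReal.ofReal Q ≤ ENNReal.ofReal P * ∑' n, ENNReal.ofReal (r n) ^ s :=
      calc ENNReal.ofReal Q ≤ μ E := hE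
        _ ≤ μ (⋃ n, E ∩ ball (c n) (r n)) := measure_mono (by
            rw [← inter_iUnion]; exact subset_inter subset_rfl hcov)
        _ ≤ ∑' n, μ (E ∩ ball (c n) (r n)) := measure_iUnion_le _
        _ ≤ ∑' n, ENNReal.ofReal P * ENNReal.ofReal (r n) ^ s := ENNReal.tsum_le_tsum hterm
        _ = _ := ENNReal.tsum_mul_left
    refine (ENNReal.ofReal_le_ofReal (min_le_right _ _)).trans ?_
    rw [ENNReal.ofReal_div_of_pos hP]
    exact ENNReal.div_le_of_le_mul' hsum

end content

/-! ### Quasi-balls -/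

/-- The inner radius of a quasi-ball may be taken at most `diam X / 4`, at the cost of replacing `K`
by `8K`. -/
lemma exists_small_radius {X : Type*} [MetricSpace X] [Nontrivial X] {K R : ℝ} (hK : 1 ≤ K)
    (hR : 0 < R) {D : Set X} {x₀ : X} (h₁ : ball x₀ R ⊆ D) (h₂ : D ⊆ ball x₀ (K * R)) :
    ∃ ρ : ℝ, 0 < ρ ∧ ENNReal.ofReal (4 * ρ) ≤ Metric.ediam (univ : Set X) ∧ ball x₀ ρ ⊆ D ∧
      D ⊆ ball x₀ (8 * K * ρ) := by
  by_cases hle : ENNReal.ofReal (4 * R) ≤ Metric.ediam (univ : Set X)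
  · exact ⟨R, hR, hle, h₁, h₂.trans (ball_subset_ball (by nlinarith))⟩
  push Not at hle
  have hfin : Metric.ediam (univ : Set X) ≠ ⊤ := hle.ne_top
  set T := (Metric.ediam (univ : Set X)).toReal with hT
  have hTeq : Metric.ediam (univ : Set X) = ENNReal.ofReal T := (ENNReal.ofReal_toReal hfin).symm
  have hdist : ∀ x y : X, dist x y ≤ T := fun x y => by
    rw [dist_edist]
    exact ENNReal.toReal_mono hfin (Metric.edist_le_ediam_of_mem (mem_univ x) (mem_univ y))
  obtain ⟨x, y, hxy⟩ := exists_pair_ne X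
  have hT0 : 0 < T := (dist_pos.2 hxy).trans_le (hdist x y)
  have hTR : T < 4 * R := by
    rw [hTeq] at hle
    exact (ENNReal.ofReal_lt_ofReal_iff (by positivity)).1 hle
  refine ⟨T / 4, by positivity, ?_, (ball_subset_ball (by linarith)).trans h₁, fun z _ => ?_⟩
  · rw [hTeq]
    exact ENNReal.ofReal_le_ofReal (by linarith)
  · rw [mem_ball]
    have := hdist z x₀
    nlinarith

/-- For every `0 < s < d/α` and `K ≥ 1` there is `L > 0` such that for every `K`-quasi-ball
`D`, `limsup_j Φ^s_∞(D ∩ E_j) ≥ L · Φ^s_∞(D)`, where `E_j = ⋃_{x ∈ A_j} B(x, ε_j^α)`. -/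
theorem limsup_sphContent_inter_ge {X : Type*} [MetricSpace X] [MeasurableSpace X]
    [BorelSpace X] (μ : Measure X) (d C : ℝ) (hd : 0 < d)
    (hreg : AhlforsRegular μ d C) (α : ℝ) (hα : 1 < α)
    (c₁ C₁ : ℝ) (hc₁ : 0 < c₁) (hC₁ : 0 < C₁)
    (ε : ℕ → ℝ) (hεpos : ∀ j, 0 < ε j) (hεlim : Tendsto ε atTop (nhds 0))
    (A : ℕ → Set X) (hA : ∀ j, IsNet c₁ C₁ (ε j) (A j)) :
    ∀ s : ℝ, 0 < s → s < d / α → ∀ K : ℝ, 1 ≤ K →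
      ∃ L : ℝ≥0∞, 0 < L ∧ ∀ D : Set X,
        (∃ (x₀ : X) (R : ℝ), 0 < R ∧ Metric.ball x₀ R ⊆ D ∧ D ⊆ Metric.ball x₀ (K * R)) →
        L * sphContent s D ≤
          Filter.limsup
            (fun j => sphContent s (D ∩ ⋃ x ∈ A j, Metric.ball x (ε j ^ α))) atTop := by
  intro s hs hsd K hK
  rcases subsingleton_or_nontrivial X with hX | hX
  · exact ⟨1, one_pos, fun D ⟨x₀, _⟩ => by
      rw [sphContent_of_subsingleton hs x₀]; simp⟩
  have hα0 : 0 < α := by linarith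
  have hC : 1 ≤ C := hreg.1
  have hC0 : 0 < C := by linarith
  have hαs : s * α < d := (lt_div_iff₀ hα0).1 hsd
  have hsd' : s < d := by nlinarith
  -- `M` and `Q` are the constants of the growth bound and of the total mass bound.
  set M : ℝ := C ^ 3 * ((2 + c₁) / c₁) ^ d with hM
  set Q : ℝ := (C ^ 3 * (4 * C₁) ^ d)⁻¹ with hQ
  have hM0 : 0 < M := by positivity
  have hQ0 : 0 < Q := by positivity
  have hq0 : 0 < min 1 (Q / M) := lt_min one_pos (by positivity)
  refine ⟨ENNReal.ofReal (min 1 (Q / M) / (8 * K) ^ s), ?_, ?_⟩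
  · rw [ENNReal.ofReal_pos]
    positivity
  rintro D ⟨x₀, R, hR, h₁, h₂⟩
  obtain ⟨ρ, hρ, hρdiam, h₁, h₂⟩ := exists_small_radius hK hR h₁ h₂
  have hμ : RegularUpTo μ d C (4 * ρ) := fun x r hr hrρ =>
    hreg.2 x r hr ((ENNReal.ofReal_le_ofReal hrρ).trans hρdiam)
  have hpow : ∀ p : ℝ, 0 < p → Tendsto (fun j => ε j ^ p) atTop (nhds 0) := fun p hp => by
    have := hεlim.rpow_const (p := p) (Or.inr hp.le)
    rwa [Real.zero_rpow hp.ne'] at this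
  have hev : ∀ᶠ j in atTop, ENNReal.ofReal (min 1 (Q / M) * ρ ^ s) ≤
      sphContent s (D ∩ ⋃ x ∈ A j, ball x (ε j ^ α)) := by
    filter_upwards [hεlim.eventually_lt_const (show 0 < ρ / 2 by positivity),
      hεlim.eventually_lt_const (show 0 < ρ / c₁ by positivity),
      hεlim.eventually_lt_const (show 0 < ρ / 4 / C₁ by positivity),
      (hpow (α - 1) (by linarith)).eventually_lt_const (show 0 < min c₁ 1 by positivity),
      (hpow (d - s * α) (by linarith)).eventually_lt_const
        (show 0 < ρ ^ (d - s) by positivity)] with j e1 e2 e3 e4 e5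
    have hε := hεpos j
    have hδ : 0 < ε j ^ α := by positivity
    have hδeq : ε j ^ α = ε j ^ (α - 1) * ε j := by
      rw [Real.rpow_sub_one hε.ne']; field_simp
    have hδ1 : ε j ^ α ≤ c₁ * ε j := by
      rw [hδeq]; gcongr; exact e4.le.trans (min_le_left _ _)
    have hδ2 : ε j ^ α ≤ ε j := by
      rw [hδeq]
      exact mul_le_of_le_one_left hε.le (e4.le.trans (min_le_right _ _))
    have hcε : c₁ * ε j ≤ ρ := by
      rw [lt_div_iff₀ hc₁] at e2; linarith
    have hCε : C₁ * ε j ≤ ρ / 4 := by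
      rw [lt_div_iff₀ hC₁] at e3; linarith
    have hsmall : ε j ^ d ≤ ρ ^ (d - s) * (ε j ^ α) ^ s := by
      have : ε j ^ d = ε j ^ (d - s * α) * (ε j ^ α) ^ s := by
        rw [← Real.rpow_mul hε.le, ← Real.rpow_add hε]; congr 1; ring
      rw [this]; gcongr
    have hsep : ∀ x ∈ A j, ∀ y ∈ A j, x ≠ y → 2 * (c₁ * ε j) < dist x y :=
      fun x hx y hy h => by
        have := (hA j).1 x hx y hy h
        linarith
    set δ := ε j ^ α
    set E := ⋃ x ∈ A j ∩ ball x₀ (ρ / 2), ball x δ with hE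
    have hEsub : E ⊆ ⋃ x ∈ A j, ball x δ := biUnion_subset_biUnion_left inter_subset_left
    have hED : E ⊆ D := by
      refine subset_trans (iUnion₂_subset fun x hx => ball_subset_ball' ?_) h₁
      have := mem_ball.1 hx.2
      linarith
    refine le_trans ?_ (sphContent_mono (subset_inter hED hEsub))
    have hβ : 0 < (δ / ε j) ^ d := by positivity
    have key := le_sphContent_of_measure_le (μ := μ) (E := E) (s := s) (ρ := ρ)
      (P := M * (δ / ε j) ^ d * ρ ^ (d - s)) (Q := Q * (δ / ε j) ^ d * ρ ^ d) hs hρ (by positivity)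
      (le_measure_thickening hC hc₁ hC₁ hε hδ hδ1 hcε hCε hμ (A j) (hA j) x₀)
      (fun c r hr hrρ => (measure_mono (inter_subset_inter_left _ hEsub)).trans
        (measure_thickening_inter_ball_le hC hd hc₁ hε hδ hδ2 (by linarith) hcε hμ (A j) hsep
          hs hsd' hsmall hr hrρ c))
    refine le_trans (ENNReal.ofReal_le_ofReal (le_of_eq ?_)) key
    have hρd : ρ ^ d = ρ ^ (d - s) * ρ ^ s := by
      rw [← Real.rpow_add hρ]; congr 1; ring
    have hquot : Q * (δ / ε j) ^ d * ρ ^ d / (M * (δ / ε j) ^ d * ρ ^ (d - s)) =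
        Q / M * ρ ^ s := by
      have : 0 < ρ ^ (d - s) := by positivity
      rw [hρd]
      generalize (δ / ε j) ^ d = β at *
      field_simp
    rw [hquot, min_mul_of_nonneg _ _ (by positivity), one_mul]
  calc ENNReal.ofReal (min 1 (Q / M) / (8 * K) ^ s) * sphContent s D
      ≤ ENNReal.ofReal (min 1 (Q / M) / (8 * K) ^ s) * ENNReal.ofReal (8 * K * ρ) ^ s := by
        gcongr
        exact (sphContent_mono h₂).trans (sphContent_ball_le hs _ _)
    _ = ENNReal.ofReal (min 1 (Q / M) * ρ ^ s) := by
        rw [ENNReal.ofReal_rpow_of_pos (by positivity), ← ENNReal.ofReal_mul (by positivity),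
          Real.mul_rpow (by positivity) hρ.le]
        congr 1
        field_simp
    _ ≤ _ := le_limsup_of_frequently_le hev.frequently
end
end
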